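/- (Upper bound on the objective gap from the iterate optimality conditions.) Let f : ℝ^N → ℝ, S ⊆ ℝ^N, let C and D be real p×N matrices, E ∈ ℝ^p, and ρ > 0. Suppose x* ∈ ℝ^N and z* ∈ S satisfy C x* + D z* = E. Let z, z⁺ ∈ S, x⁺ ∈ ℝ^N, and y⁺ ∈ ℝ^p be such that: (a) x⁺ minimizes the function x ↦ f(x) + ⟨y⁺ − ρ D (z⁺ − z), C x⟩ over ℝ^N, and (b) z⁺ minimizes the function w ↦ ⟨y⁺, D w⟩ over S. Then with residual r⁺ = C x⁺ + D z⁺ − E, one has f(x⁺) − f(x*) ≤ −⟨y⁺, r⁺⟩ − ρ ⟨D (z⁺ − z), −r⁺ + D (z⁺ − z*)⟩. -/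

import Mathlib

open Matrix

/-!
Optimality of `x⁺` against `x*` bounds the gap `f x⁺ - f x*` by `⟨y⁺ - ρ D (z⁺ - z), C x* - C x⁺⟩`.
Feasibility of `(x*, z*)` turns `C x* - C x⁺` into `-r⁺ + D (z⁺ - z*)`. Expanding the pairing, the
only term besides the claimed bound is `⟨y⁺, D (z⁺ - z*)⟩`, which is nonpositive by optimality
of `z⁺`.
-/

theorem sub_le_map_sub_of_isMinOn_add {X V R F : Type*} [AddGroup V] [AddCommGroup R]
    [Preorder R] [IsOrderedAddMonoid R] [FunLike F V R] [AddMonoidHomClass F V R]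
    {f : X → R} {g : X → V} {φ : F} {T : Set X} {a b : X}
    (ha : IsMinOn (fun x ↦ f x + φ (g x)) T a) (hb : b ∈ T) :
    f a - f b ≤ φ (g b - g a) := by
  rw [map_sub, sub_le_sub_iff, add_comm (φ (g b))]
  exact isMinOn_iff.mp ha b hb

theorem sub_eq_neg_residual_add_sub {V : Type*} [AddCommGroup V] {a b a₀ b₀ E : V}
    (hfeas : a₀ + b₀ = E) : a₀ - a = -(a + b - E) + (b - b₀) := by
  rw [← hfeas]
  abel

theorem stmt_7_general {R V X Z : Type*} [CommRing R] [Preorder R] [IsOrderedAddMonoid R]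
    [AddCommGroup V] [Module R V] (B : LinearMap.BilinForm R V)
    {f : X → R} {T : Set X} {S : Set Z} {C : X → V} {D : Z → V} {E r : V} (ρ : R)
    {xstar xplus : X} {zstar zplus : Z} (z : Z) {yplus : V}
    (hxstar : xstar ∈ T) (hzstar : zstar ∈ S) (hfeas : C xstar + D zstar = E)
    (hx : IsMinOn (fun x ↦ f x + B (yplus - ρ • (D zplus - D z)) (C x)) T xplus)
    (hzplus : IsMinOn (fun w ↦ B yplus (D w)) S zplus)
    (hr : r = C xplus + D zplus - E) :
    f xplus - f xstar ≤
      -B yplus r - ρ * B (D zplus - D z) (-r + (D zplus - D zstar)) := by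
  have pairing_nonpos : B yplus (D zplus - D zstar) ≤ 0 := by
    rw [map_sub, sub_nonpos]
    exact isMinOn_iff.mp hzplus zstar hzstar
  calc
    f xplus - f xstar ≤ B (yplus - ρ • (D zplus - D z)) (C xstar - C xplus) :=
      sub_le_map_sub_of_isMinOn_add hx hxstar
    _ = B (yplus - ρ • (D zplus - D z)) (-r + (D zplus - D zstar)) := by
      rw [hr, ← sub_eq_neg_residual_add_sub hfeas]
    _ = -B yplus r - ρ * B (D zplus - D z) (-r + (D zplus - D zstar))
          + B yplus (D zplus - D zstar) := by
      rw [LinearMap.BilinForm.sub_left, LinearMap.BilinForm.smul_left, map_add, map_neg]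
      ring
    _ ≤ -B yplus r - ρ * B (D zplus - D z) (-r + (D zplus - D zstar)) :=
      add_le_of_nonpos_right pairing_nonpos

/-- Upper bound on the objective gap from the iterate optimality conditions:
if `x⁺` minimizes `x ↦ f x + ⟨y⁺ − ρ D (z⁺ − z), C x⟩` over `ℝ^N` and `z⁺`
minimizes `w ↦ ⟨y⁺, D w⟩` over `S`, then with `r⁺ = C x⁺ + D z⁺ − E`,
`f x⁺ − f x* ≤ −⟨y⁺, r⁺⟩ − ρ ⟨D (z⁺ − z), −r⁺ + D (z⁺ − z*)⟩`. -/
theorem stmt_7 (N p : ℕ) (f : (Fin N → ℝ) → ℝ) (S : Set (Fin N → ℝ))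
    (C D : Matrix (Fin p) (Fin N) ℝ) (E : Fin p → ℝ) (ρ : ℝ) (hρ : 0 < ρ)
    (xstar : Fin N → ℝ) (zstar : Fin N → ℝ)
    (hzstar : zstar ∈ S)
    (hfeas : C.mulVec xstar + D.mulVec zstar = E)
    (z zplus : Fin N → ℝ) (hz : z ∈ S)
    (xplus : Fin N → ℝ) (yplus : Fin p → ℝ)
    (hx : ∀ x : Fin N → ℝ,
      f xplus + (yplus - ρ • D.mulVec (zplus - z)) ⬝ᵥ C.mulVec xplus ≤
        f x + (yplus - ρ • D.mulVec (zplus - z)) ⬝ᵥ C.mulVec x)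
    (hzplus : zplus ∈ S ∧ ∀ w ∈ S, yplus ⬝ᵥ D.mulVec zplus ≤ yplus ⬝ᵥ D.mulVec w) :
    f xplus - f xstar ≤
      -(yplus ⬝ᵥ (C.mulVec xplus + D.mulVec zplus - E)) -
        ρ * (D.mulVec (zplus - z) ⬝ᵥ
          (-(C.mulVec xplus + D.mulVec zplus - E) + D.mulVec (zplus - zstar))) := by
  simp only [mulVec_sub] at hx ⊢
  exact stmt_7_general (dotProductBilin ℝ ℝ) ρ z (Set.mem_univ xstar) hzstar hfeas
    (isMinOn_univ_iff.mpr hx) (isMinOn_iff.mpr hzplus.2) rfl
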